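/- For every real s > 1 one has β(s) = 1 − 3^{−s} + 5^{−s} − 2^{3−2s}·Σ_{ℓ=1}^∞ (ζ(2ℓ−1+s)−1)/(16^ℓ·(2ℓ−1)·B(s,2ℓ−1)), where the series converges absolutely. -/

import Mathlib

/-!
The binomial series gives, for `0 < x < 1`,
`(1 - x)^{-s} - (1 + x)^{-s} = ∑_ℓ 2 · (s)_{2ℓ+1}/(2ℓ+1)! · x^{2ℓ+1}`,
where `(s)_j/j! = Γ(s+j)/(Γ(s) j!) = 1/(j B(s,j))`. Taking `x = 1/(4m)` and multiplying by
`(4m)^{-s}` expands `(4m-1)^{-s} - (4m+1)^{-s}` into a series with nonnegative terms. From the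
fourth term on, the series of `β(s)` is minus the sum of these differences over `m ≥ 2`. All terms
of the resulting double series are nonnegative, so the order of summation may be exchanged, and the
sum over `m ≥ 2` of `m^{-(2ℓ+1+s)}` is `ζ(2ℓ+1+s) - 1`.
-/

/-- The Riemann zeta-function for real argument `x > 1`, as the series `∑_{n≥1} n^{-x}`. -/
noncomputable def rzeta (x : ℝ) : ℝ := ∑' n : ℕ, ((n : ℝ) + 1) ^ (-x)

/-- The Euler beta-function `B(x,y) = Γ(x)Γ(y)/Γ(x+y)`. -/
noncomputable def eulerBeta (x y : ℝ) : ℝ :=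
  Real.Gamma x * Real.Gamma y / Real.Gamma (x + y)

/-- The Dirichlet beta-function `β(s) = ∑_{n≥0} (-1)^n/(2n+1)^s` for real `s > 1`. -/
noncomputable def dirichletBeta (s : ℝ) : ℝ := ∑' n : ℕ, (-1 : ℝ) ^ n / (2 * (n : ℝ) + 1) ^ s

namespace DirichletBetaSeries

/-- The binomial coefficient `(s)_n / n!`, written with Gamma values. -/
noncomputable def coef (s : ℝ) (n : ℕ) : ℝ := Real.Gamma (s + n) / (Real.Gamma s * n.factorial)

lemma coef_pos {s : ℝ} (hs : 0 < s) (n : ℕ) : 0 < coef s n := by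
  unfold coef
  have h1 := Real.Gamma_pos_of_pos hs
  have h2 : 0 < Real.Gamma (s + n) := Real.Gamma_pos_of_pos (by positivity)
  positivity

lemma ascPochhammer_eval_mul_Gamma {s : ℝ} (hs : 0 < s) (n : ℕ) :
    (ascPochhammer ℝ n).eval s * Real.Gamma s = Real.Gamma (s + n) := by
  induction n with
  | zero => simp
  | succ n ih =>
    rw [ascPochhammer_succ_eval]
    push_cast
    rw [← add_assoc, Real.Gamma_add_one (by positivity), ← ih]
    ring

lemma choose_eq_coef {s : ℝ} (hs : 0 < s) (n : ℕ) :
    Ring.choose (s + n - 1) n = coef s n := by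
  rw [← Ring.multichoose_eq, coef, ← ascPochhammer_eval_mul_Gamma hs n]
  have h := Ring.factorial_nsmul_multichoose_eq_ascPochhammer s n
  rw [Polynomial.ascPochhammer_smeval_eq_eval, nsmul_eq_mul] at h
  have h1 := (Real.Gamma_pos_of_pos hs).ne'
  have h2 : (n.factorial : ℝ) ≠ 0 := by positivity
  rw [← h]
  field_simp

lemma hasSum_binomial {s x : ℝ} (hs : 0 < s) (hx : |x| < 1) :
    HasSum (fun n : ℕ => coef s n * x ^ n) ((1 - x) ^ (-s)) := by
  have h := (Real.one_div_one_sub_rpow_hasFPowerSeriesOnBall_zero s).hasSum (y := x)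
    (by simpa [enorm_eq_nnnorm, ← NNReal.coe_lt_coe] using hx)
  have h0 : 0 ≤ 1 - x := by linarith [le_abs_self x]
  simp only [FormalMultilinearSeries.ofScalars_apply_eq, zero_add, choose_eq_coef hs,
    smul_eq_mul] at h
  rwa [Real.rpow_neg h0, ← one_div]

/-- Only the odd powers survive in `(1 - x)^{-s} - (1 + x)^{-s}`. -/
lemma hasSum_odd {s x : ℝ} (hs : 0 < s) (hx : |x| < 1) :
    HasSum (fun l : ℕ => coef s (2 * l + 1) * (2 * x ^ (2 * l + 1)))
      ((1 - x) ^ (-s) - (1 + x) ^ (-s)) := by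
  have h := (hasSum_binomial hs hx).sub (hasSum_binomial (x := -x) hs (by simpa using hx))
  rw [sub_neg_eq_add] at h
  have hinj : Function.Injective (fun l : ℕ => 2 * l + 1) := fun a b hab => by
    simp only at hab; omega
  rw [← hinj.hasSum_iff] at h
  · convert! h using 1
    ext l
    have : (-x) ^ (2 * l + 1) = -x ^ (2 * l + 1) := Odd.neg_pow ⟨l, rfl⟩ x
    simp only [Function.comp, this]
    ring
  · intro n hn
    have : Even n := by
      by_contra hodd
      obtain ⟨k, hk⟩ := Nat.not_even_iff_odd.mp hodd
      exact hn ⟨k, hk.symm⟩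
    rw [this.neg_pow, sub_self]

/-- The term `(4m)^{-s} · 2 (s)_{2l+1}/(2l+1)! · (4m)^{-(2l+1)}` of the double series, indexed from
`n = 0` through `m = n + 2`. -/
noncomputable def term (s : ℝ) (n l : ℕ) : ℝ :=
  (4 * ((n : ℝ) + 2)) ^ (-s) * (coef s (2 * l + 1) * (2 * (1 / (4 * ((n : ℝ) + 2))) ^ (2 * l + 1)))

lemma term_nonneg {s : ℝ} (hs : 0 < s) (n l : ℕ) : 0 ≤ term s n l := by
  have := coef_pos hs (2 * l + 1)
  unfold term
  positivity

lemma hasSum_term {s : ℝ} (hs : 0 < s) (n : ℕ) :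
    HasSum (fun l => term s n l)
      ((4 * (n : ℝ) + 7) ^ (-s) - (4 * (n : ℝ) + 9) ^ (-s)) := by
  have hpos : (0 : ℝ) < 4 * ((n : ℝ) + 2) := by positivity
  have hlt : 1 / (4 * ((n : ℝ) + 2)) < 1 := by
    rw [div_lt_one hpos]
    have : (0 : ℝ) ≤ n := n.cast_nonneg
    linarith
  have h := (hasSum_odd hs (x := 1 / (4 * ((n : ℝ) + 2)))
    (by rwa [abs_of_pos (by positivity)])).mul_left ((4 * ((n : ℝ) + 2)) ^ (-s))
  have e1 : 4 * (n : ℝ) + 7 = (4 * ((n : ℝ) + 2)) * (1 - 1 / (4 * ((n : ℝ) + 2))) := by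
    field_simp; ring
  have e2 : 4 * (n : ℝ) + 9 = (4 * ((n : ℝ) + 2)) * (1 + 1 / (4 * ((n : ℝ) + 2))) := by
    field_simp; ring
  rw [e1, e2, Real.mul_rpow hpos.le (by linarith), Real.mul_rpow hpos.le (by positivity), ← mul_sub]
  exact h

lemma summable_shift {s : ℝ} (hs : 1 < s) : Summable (fun n : ℕ => ((n : ℝ) + 1) ^ (-s)) := by
  have h := (summable_nat_add_iff 1).mpr (Real.summable_nat_rpow.mpr (show -s < -1 by linarith))
  simpa using h

lemma hasSum_rzeta_sub_one {x : ℝ} (hx : 1 < x) :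
    HasSum (fun n : ℕ => ((n : ℝ) + 2) ^ (-x)) (rzeta x - 1) := by
  have h := (hasSum_nat_add_iff' 1).mpr (summable_shift hx).hasSum
  simp only [Finset.sum_range_one, Nat.cast_zero, zero_add, Real.one_rpow, Nat.cast_add,
    Nat.cast_one, add_assoc, one_add_one_eq_two] at h
  exact h

lemma summand_eq {s : ℝ} (hs : 0 < s) (l : ℕ) (z : ℝ) :
    z / ((16 : ℝ) ^ (l + 1) * (2 * (l : ℝ) + 1) * eulerBeta s (2 * (l : ℝ) + 1)) =
      z * (coef s (2 * l + 1) / 16 ^ (l + 1)) := by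
  have hG : Real.Gamma (2 * (l : ℝ) + 1) = ((2 * l).factorial : ℝ) := by
    have := Real.Gamma_nat_eq_factorial (2 * l)
    push_cast at this
    exact this
  have h1 := (Real.Gamma_pos_of_pos hs).ne'
  have h2 : Real.Gamma (s + (2 * (l : ℝ) + 1)) ≠ 0 := (Real.Gamma_pos_of_pos (by positivity)).ne'
  have h3 : ((2 * l).factorial : ℝ) ≠ 0 := by positivity
  have h4 : (2 * (l : ℝ) + 1) ≠ 0 := by positivity
  rw [coef, eulerBeta, hG, Nat.factorial_succ]
  push_cast
  field_simp

lemma hasSum_term_fst {s : ℝ} (hs : 1 < s) (l : ℕ) :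
    HasSum (fun n => term s n l) ((2 : ℝ) ^ (3 - 2 * s) *
      ((rzeta ((2 * (l : ℝ) + 1) + s) - 1) /
        ((16 : ℝ) ^ (l + 1) * (2 * (l : ℝ) + 1) * eulerBeta s (2 * (l : ℝ) + 1)))) := by
  have hl : (0 : ℝ) ≤ l := l.cast_nonneg
  have h := (hasSum_rzeta_sub_one (x := (2 * (l : ℝ) + 1) + s) (by linarith)).mul_left
    ((2 : ℝ) ^ (3 - 2 * s) * (coef s (2 * l + 1) / 16 ^ (l + 1)))
  rw [summand_eq (by linarith)]
  convert! h using 1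
  · ext n
    have hm : (0 : ℝ) < (n : ℝ) + 2 := by positivity
    have e1 : (2 : ℝ) ^ (3 - 2 * s) = 8 * (4 : ℝ) ^ (-s) := by
      rw [show (4 : ℝ) = 2 ^ (2 : ℝ) by norm_num, ← Real.rpow_mul (by norm_num),
        show (3 : ℝ) - 2 * s = 3 + 2 * (-s) by ring, Real.rpow_add (by norm_num)]
      norm_num
    have e2 : ((n : ℝ) + 2) ^ (-((2 * (l : ℝ) + 1) + s)) =
        (((n : ℝ) + 2) ^ (2 * l + 1))⁻¹ * ((n : ℝ) + 2) ^ (-s) := by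
      rw [neg_add, Real.rpow_add hm, Real.rpow_neg hm.le, ← Real.rpow_natCast]
      push_cast
      rfl
    have e3 : (16 : ℝ) ^ (l + 1) = 4 * 4 ^ (2 * l + 1) := by
      rw [show (16 : ℝ) = 4 ^ 2 by norm_num, ← pow_mul]; ring
    rw [term, e1, e2, e3, Real.mul_rpow (by norm_num) hm.le, one_div, mul_inv, mul_pow, inv_pow,
      inv_pow]
    field_simp
    ring
  · ring

lemma summable_beta {s : ℝ} (hs : 1 < s) :
    Summable (fun n : ℕ => (-1 : ℝ) ^ n / (2 * (n : ℝ) + 1) ^ s) := by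
  refine Summable.of_norm_bounded (summable_shift hs) fun n => ?_
  have hn : (0 : ℝ) ≤ n := n.cast_nonneg
  rw [norm_div, norm_pow, norm_neg, norm_one, one_pow, Real.norm_of_nonneg (by positivity),
    Real.rpow_neg (by positivity), one_div]
  gcongr
  linarith

/-- Grouping the series of `β(s)` in pairs from its fourth term on. -/
lemma hasSum_beta_tail {s : ℝ} (hs : 1 < s) :
    HasSum (fun n : ℕ => (4 * (n : ℝ) + 7) ^ (-s) - (4 * (n : ℝ) + 9) ^ (-s))
      (1 - (3 : ℝ) ^ (-s) + (5 : ℝ) ^ (-s) - dirichletBeta s) := by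
  have hb := summable_beta hs
  set f : ℕ → ℝ := fun n : ℕ => (-1 : ℝ) ^ n / (2 * (n : ℝ) + 1) ^ s with hf
  have h3 : Summable (fun k => f (k + 3)) := (summable_nat_add_iff 3).mpr hb
  have he : Summable (fun k => f (2 * k + 3)) :=
    h3.comp_injective (i := fun k => 2 * k) fun a b hab => by simp only at hab; omega
  have ho : Summable (fun k => f (2 * k + 1 + 3)) :=
    h3.comp_injective (i := fun k => 2 * k + 1) fun a b hab => by simp only at hab; omega
  have hsum := tsum_even_add_odd (f := fun k => f (k + 3)) he ho
  have hsplit := hb.sum_add_tsum_nat_add 3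
  have hval : dirichletBeta s = ∑' n, f n := rfl
  have key := (he.hasSum.add ho.hasSum).neg
  have e0 : f 0 = 1 := by simp [hf]
  have e1 : f 1 = -(3 : ℝ) ^ (-s) := by
    simp only [hf]; rw [Real.rpow_neg (by norm_num)]; norm_num; rw [neg_div, one_div]
  have e2 : f 2 = (5 : ℝ) ^ (-s) := by
    simp only [hf]; rw [Real.rpow_neg (by norm_num)]; norm_num
  convert! key using 1
  · ext n
    have hn : (0 : ℝ) ≤ n := n.cast_nonneg
    have p1 : (-1 : ℝ) ^ (2 * n + 3) = -1 := Odd.neg_one_pow ⟨n + 1, by ring⟩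
    have p2 : (-1 : ℝ) ^ (2 * n + 1 + 3) = 1 := Even.neg_one_pow ⟨n + 2, by ring⟩
    simp only [hf, p1, p2]
    rw [Real.rpow_neg (by positivity), Real.rpow_neg (by positivity)]
    push_cast
    rw [show 2 * (2 * (n : ℝ) + 3) + 1 = 4 * n + 7 by ring,
      show 2 * (2 * (n : ℝ) + 1 + 3) + 1 = 4 * n + 9 by ring]
    ring
  · rw [hsum, hval, ← hsplit]
    simp only [Finset.sum_range_succ, Finset.sum_range_zero, e0, e1, e2]
    ring

end DirichletBetaSeries

open DirichletBetaSeries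

/-- For `s > 1`,
`β(s) = 1 - 3^{-s} + 5^{-s} - 2^{3-2s}·∑_{ℓ=1}^∞ (ζ(2ℓ-1+s)-1)/(16^ℓ(2ℓ-1)B(s,2ℓ-1))`,
the series converging absolutely. -/
theorem dirichletBeta_series (s : ℝ) (hs : 1 < s) :
    Summable (fun ℓ : ℕ =>
      |(rzeta ((2 * (ℓ : ℝ) + 1) + s) - 1) /
        ((16 : ℝ) ^ (ℓ + 1) * (2 * (ℓ : ℝ) + 1) * eulerBeta s (2 * (ℓ : ℝ) + 1))|) ∧
      dirichletBeta s =
        1 - (3 : ℝ) ^ (-s) + (5 : ℝ) ^ (-s) -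
          (2 : ℝ) ^ (3 - 2 * s) *
            ∑' ℓ : ℕ,
              (rzeta ((2 * (ℓ : ℝ) + 1) + s) - 1) /
                ((16 : ℝ) ^ (ℓ + 1) * (2 * (ℓ : ℝ) + 1) * eulerBeta s (2 * (ℓ : ℝ) + 1)) := by
  have hs0 : 0 < s := by linarith
  have hT : Summable (fun p : ℕ × ℕ => term s p.1 p.2) := by
    rw [summable_prod_of_nonneg fun p => term_nonneg hs0 p.1 p.2]
    refine ⟨fun n => (hasSum_term hs0 n).summable, ?_⟩
    simp only [(hasSum_term hs0 _).tsum_eq]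
    exact (hasSum_beta_tail hs).summable
  -- The sum of the double series, by rows (fixed `m`) and by columns (fixed `ℓ`).
  have hrow := hT.hasSum.prod_fiberwise fun n => hasSum_term hs0 n
  have hcol := ((Equiv.prodComm ℕ ℕ).hasSum_iff.mpr hT.hasSum).prod_fiberwise
    fun l => hasSum_term_fst hs l
  have hne : (2 : ℝ) ^ (3 - 2 * s) ≠ 0 := (Real.rpow_pos_of_pos (by norm_num) _).ne'
  refine ⟨((summable_mul_left_iff hne).mp hcol.summable).abs, ?_⟩
  rw [← tsum_mul_left, hcol.tsum_eq,
    hrow.unique (hasSum_beta_tail hs)]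
  ring
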